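/- For every real m > 0, all integers k ≥ 1 and 1 ≤ k' ≤ k, and every θ ∈ [0, π], the damped partial sum satisfies |g(θ) − g^m_{k',k}(θ)| ≤ d^m_{k',k}·J(θ)/(π (k'+1)) + m·C_m·J(θ)/(k+1) + m·π·(π−θ)/(3 (k+1)^2). -/

import Mathlib

open Real MeasureTheory

/-- The step function on `[0, π]`: `1` on `(β, α)`, `1/2` at `α` and `β`, `0` elsewhere. -/
noncomputable def stepG (α β θ : ℝ) : ℝ :=
  if θ = α ∨ θ = β then 1 / 2 else if θ ∈ Set.Ioo β α then 1 else 0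

/-- Fourier coefficients of the step function. -/
noncomputable def fourierC (α β : ℝ) : ℕ → ℝ
  | 0 => (α - β) / Real.pi
  | (j + 1) => (2 / Real.pi) * (Real.sin ((j + 1) * α) - Real.sin ((j + 1) * β)) / (j + 1)

/-- Exponent-`m` Lanczos damping factors `d^m_{j,k}`, with `d^m_{0,k} = 1`. -/
noncomputable def dampL (m : ℝ) (k j : ℕ) : ℝ :=
  if j = 0 then 1
  else (Real.sin (j * Real.pi / (k + 1)) / (j * Real.pi / (k + 1))) ^ m

/-- The damped partial sum `g^m_{k',k}(θ) = ∑_{j=0}^{k'} c_j d^m_{j,k} cos(jθ)`. -/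
noncomputable def dampedGk (α β m : ℝ) (k k' : ℕ) (θ : ℝ) : ℝ :=
  ∑ j ∈ Finset.range (k' + 1), fourierC α β j * dampL m k j * Real.cos (j * θ)

/-- The constant `C_m = ∫_0^π (sin u)^{m-1}(sin u - u cos u)/u^{m+2} du`. -/
noncomputable def lanczosCm (m : ℝ) : ℝ :=
  ∫ u in Set.Ioo (0 : ℝ) Real.pi,
    Real.sin u ^ (m - 1) * (Real.sin u - u * Real.cos u) / u ^ (m + 2)

/-- The quantity `J(θ)` controlling the pointwise Fourier error. -/
noncomputable def Jfun (α β θ : ℝ) : ℝ :=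
  if θ = α then
    1 / |Real.sin α| + 1 / |Real.sin ((α + β) / 2)| + 1 / |Real.sin ((α - β) / 2)|
  else if θ = β then
    1 / |Real.sin β| + 1 / |Real.sin ((α + β) / 2)| + 1 / |Real.sin ((α - β) / 2)|
  else
    1 / |Real.sin ((θ + α) / 2)| + 1 / |Real.sin ((θ - α) / 2)|
      + 1 / |Real.sin ((θ + β) / 2)| + 1 / |Real.sin ((θ - β) / 2)|

open scoped Real

lemma tele_sin (x : ℝ) (n : ℕ) :
    2 * Real.sin (x/2) * Real.sin ((n+1)*x) = Real.cos ((n+1/2)*x) - Real.cos ((n+1+1/2)*x) := by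
  have h1 : ((n:ℝ)+1/2)*x = (n+1)*x - x/2 := by ring
  have h2 : ((n:ℝ)+1+1/2)*x = (n+1)*x + x/2 := by ring
  rw [h1, h2, Real.cos_sub, Real.cos_add]; ring

lemma dirichlet_cos (x : ℝ) (n : ℕ) :
    Real.sin (x/2) * (1 + 2 * ∑ j ∈ Finset.range n, Real.cos ((j+1)*x)) = Real.sin ((n+1/2)*x) := by
  induction n with
  | zero => simp; congr 1; ring
  | succ n ih =>
    rw [Finset.sum_range_succ, mul_add 2, ← add_assoc, mul_add (Real.sin (x/2)), ih]
    have h1 : ((n:ℝ)+1/2)*x = (n+1)*x - x/2 := by ring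
    have h2 : (((n+1:ℕ):ℝ)+1/2)*x = (n+1)*x + x/2 := by push_cast; ring
    rw [h1, h2, Real.sin_sub, Real.sin_add]; ring

noncomputable def TT (n : ℕ) (x : ℝ) : ℝ := ∑ j ∈ Finset.range n, Real.sin ((j+1)*x) / (j+1)

/-- Tail difference bound, Abel summation with explicit boundary term. -/
lemma TT_sub (x : ℝ) (n N : ℕ) :
    |2 * Real.sin (x/2) * (TT (n+N) x - TT n x) + Real.cos ((n+N+1/2)*x)/(n+N+1)
      - Real.cos ((n+1/2)*x)/(n+1)| ≤ 1/(n+1) - 1/(n+N+1) := by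
  induction N with
  | zero => simp
  | succ N ih =>
    have e : TT (n+(N+1)) x = TT (n+N) x + Real.sin ((n+N+1)*x)/(n+N+1) := by
      rw [← add_assoc, TT, Finset.sum_range_succ, TT]; push_cast; rfl
    have t := tele_sin x (n+N)
    push_cast at t
    have p : (0:ℝ) < n+N+1 := by positivity
    have p2 : (0:ℝ) < n+N+1+1 := by positivity
    set c := Real.cos ((n+N+1+1/2)*x) with hc
    have hc1 : |c| ≤ 1 := Real.abs_cos_le_one _
    have hd : (0:ℝ) ≤ 1/(n+N+1) - 1/(n+N+1+1) := by
      rw [sub_nonneg]; exact one_div_le_one_div_of_le p (by linarith)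
    have e2 : 2 * Real.sin (x/2) * (TT (n+(N+1)) x - TT n x) + Real.cos ((n+((N+1:ℕ):ℝ)+1/2)*x)/(n+((N+1:ℕ):ℝ)+1)
      - Real.cos ((n+1/2)*x)/(n+1) = (2 * Real.sin (x/2) * (TT (n+N) x - TT n x) + Real.cos ((n+N+1/2)*x)/(n+N+1)
      - Real.cos ((n+1/2)*x)/(n+1)) - c * (1/(n+N+1) - 1/(n+N+1+1)) := by
      rw [e]; push_cast
      rw [← add_assoc (n:ℝ) N 1, ← hc]
      have : 2 * Real.sin (x/2) * (Real.sin ((n+N+1)*x)/(n+N+1)) = (Real.cos ((n+N+1/2)*x) - c)/(n+N+1) := by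
        rw [← t]; ring
      have e3 : 2 * Real.sin (x/2) * (TT (n+N) x + Real.sin ((n+N+1)*x)/(n+N+1) - TT n x) = 2 * Real.sin (x/2) * (TT (n+N) x - TT n x) + 2 * Real.sin (x/2) * (Real.sin ((n+N+1)*x)/(n+N+1)) := by ring
      rw [e3, this]; ring
    rw [e2]
    refine (abs_sub _ _).trans ?_
    rw [abs_mul, abs_of_nonneg hd]
    push_cast
    rw [← add_assoc (n:ℝ) N 1]
    nlinarith [mul_le_mul_of_nonneg_right hc1 hd]

lemma TT_hasDeriv (n : ℕ) (x : ℝ) :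
    HasDerivAt (TT n) (∑ j ∈ Finset.range n, Real.cos ((j+1)*x)) x := by
  unfold TT
  apply HasDerivAt.fun_sum
  intro j _
  have h : HasDerivAt (fun y : ℝ => ((j:ℝ)+1)*y) ((j:ℝ)+1) x := by
    simpa using (hasDerivAt_id x).const_mul ((j:ℝ)+1)
  refine ((h.sin).div_const ((j:ℝ)+1)).congr_deriv ?_
  have : (j:ℝ)+1 ≠ 0 := by positivity
  field_simp

lemma TT_pi (n : ℕ) : TT n π = 0 := by
  unfold TT
  apply Finset.sum_eq_zero
  intro j _
  have : Real.sin (((j:ℝ)+1)*π) = 0 := by exact_mod_cast Real.sin_nat_mul_pi (j+1)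
  simp [this]

lemma cos_half_pi (n : ℕ) : Real.cos ((n+1/2)*π) = 0 := by
  have : ((n:ℝ)+1/2)*π = n*π + π/2 := by ring
  rw [this, Real.cos_add_pi_div_two]; simp

lemma E_bound0 (x : ℝ) (hx : 0 < x) (hx' : x ≤ π) (n : ℕ) :
    |(π - x)/2 - TT n x| ≤ (1/Real.sin (x/2) + (π - x)/(Real.sin (x/2))^2)/(2*n+1) := by
  have hs0 : 0 < Real.sin (x/2) := Real.sin_pos_of_pos_of_lt_pi (by linarith) (by linarith [Real.pi_pos])
  set s := Real.sin (x/2) with hs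
  have hn : (0:ℝ) < 2*n+1 := by positivity
  have hsge : ∀ t ∈ Set.Icc x π, s ≤ Real.sin (t/2) := by
    intro t ht
    apply Real.sin_le_sin_of_le_of_le_pi_div_two <;> linarith [ht.1, ht.2, Real.pi_pos]
  have key := (convex_Icc x π).norm_image_sub_le_of_norm_hasDerivWithin_le
    (f := fun t => (π - t)/2 - TT n t - Real.cos ((n+1/2)*t)/((2*n+1)*Real.sin (t/2)))
    (f' := fun t => Real.cos ((n+1/2)*t) * Real.cos (t/2) / (2*(2*n+1)*(Real.sin (t/2))^2))
    (C := 1/((2*n+1)*s^2)) (x := x) (y := π) ?_ ?_ ⟨le_rfl, hx'⟩ ⟨hx', le_rfl⟩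
  · have hc : |Real.cos ((n+1/2)*x)/((2*n+1)*s)| ≤ 1/((2*n+1)*s) := by
      rw [abs_div, abs_of_pos (by positivity : 0 < (2*n+1)*s)]
      gcongr
      exact Real.abs_cos_le_one _
    simp only [TT_pi, cos_half_pi, sub_self, zero_div, Real.norm_eq_abs] at key
    rw [abs_of_nonneg (by linarith : 0 ≤ π - x), ← hs] at key
    have e : (1/s + (π - x)/s^2)/(2*n+1) = 1/((2*n+1)*s) + 1/((2*n+1)*s^2) * (π-x) := by
      field_simp
    rw [e]
    rw [abs_le] at *
    constructor <;> linarith [key.1, key.2, hc.1, hc.2]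
  · intro t ht
    have hst := hsge t ht
    have hst0 : 0 < Real.sin (t/2) := by linarith
    apply HasDerivAt.hasDerivWithinAt
    have h2 : HasDerivAt (fun y : ℝ => y/2) (1/2) t := (hasDerivAt_id t).div_const 2
    have h1 : HasDerivAt (fun y : ℝ => ((n:ℝ)+1/2)*y) ((n:ℝ)+1/2) t := by
      simpa using (hasDerivAt_id t).const_mul ((n:ℝ)+1/2)
    have h3 := (((hasDerivAt_id t).const_sub π).div_const 2).sub (TT_hasDeriv n t)
    have h4 := h3.sub (h1.cos.div (h2.sin.const_mul (2*(n:ℝ)+1)) (by positivity))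
    refine h4.congr_deriv ?_
    have d := dirichlet_cos t n
    have : ∑ j ∈ Finset.range n, Real.cos ((j+1)*t) = (Real.sin ((n+1/2)*t)/Real.sin (t/2) - 1)/2 := by
      rw [← d, mul_div_cancel_left₀ _ hst0.ne']; ring
    rw [this]
    field_simp
    ring
  · intro t ht
    have hst := hsge t ht
    have hst0 : 0 < Real.sin (t/2) := by linarith
    rw [Real.norm_eq_abs, abs_div, abs_mul, abs_of_pos (by positivity : 0 < (2*(2*n+1)*(Real.sin (t/2))^2))]
    have a := mul_le_mul (Real.abs_cos_le_one ((n+1/2)*t)) (Real.abs_cos_le_one (t/2)) (abs_nonneg _) zero_le_one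
    have b : (2*n+1)*s^2 ≤ (2*(2*n+1)*(Real.sin (t/2))^2) := by
      have : s^2 ≤ (Real.sin (t/2))^2 := by gcongr
      nlinarith [sq_nonneg s]
    rw [mul_one] at a
    gcongr

lemma E_bound1 (x : ℝ) (hx : 0 < x) (hx' : x ≤ π) (n : ℕ) :
    |(π - x)/2 - TT n x| ≤ 1/((n+1)*Real.sin (x/2)) := by
  have hs0 : 0 < Real.sin (x/2) := Real.sin_pos_of_pos_of_lt_pi (by linarith) (by linarith [Real.pi_pos])
  have hb : ∀ N : ℕ, |TT (n+N) x - TT n x| ≤ 1/((n+1)*Real.sin (x/2)) := by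
    intro N
    have h := TT_sub x n N
    set s := Real.sin (x/2)
    have h1 : |Real.cos ((n+N+1/2)*x)/(n+N+1)| ≤ 1/(n+N+1) := by
      rw [abs_div, abs_of_pos (by positivity : (0:ℝ) < n+N+1)]; gcongr; exact Real.abs_cos_le_one _
    have h2 : |Real.cos ((n+1/2)*x)/(n+1)| ≤ 1/(n+1) := by
      rw [abs_div, abs_of_pos (by positivity : (0:ℝ) < n+1)]; gcongr; exact Real.abs_cos_le_one _
    have h3 : |s * (TT (n+N) x - TT n x)| ≤ 1/(n+1) := by
      rw [abs_le] at *
      constructor <;> linarith [h.1, h.2, h1.1, h1.2, h2.1, h2.2]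
    rw [abs_mul, abs_of_pos hs0] at h3
    rw [← div_div, le_div_iff₀ hs0]; linarith
  have hlim : Filter.Tendsto (fun N : ℕ => TT N x) Filter.atTop (nhds ((π - x)/2)) := by
    rw [tendsto_iff_dist_tendsto_zero]
    refine squeeze_zero (fun _ => dist_nonneg) (g := fun N : ℕ => (1/Real.sin (x/2) + (π - x)/(Real.sin (x/2))^2)/(2*N+1)) ?_ ?_
    · intro N; rw [dist_comm]; exact E_bound0 x hx hx' N
    · apply Filter.Tendsto.const_div_atTop
      apply Filter.tendsto_atTop_add_const_right
      exact Filter.Tendsto.const_mul_atTop (by norm_num) tendsto_natCast_atTop_atTop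
  have hlim2 := ((hlim.comp (Filter.tendsto_add_atTop_nat n)).sub_const (TT n x)).abs
  refine le_of_tendsto hlim2 (Filter.Eventually.of_forall fun N => ?_)
  have := hb N
  rwa [add_comm] at this

noncomputable def saw (x : ℝ) : ℝ := (SignType.sign x * π - x)/2

lemma TT_neg (n : ℕ) (x : ℝ) : TT n (-x) = - TT n x := by
  unfold TT
  rw [← Finset.sum_neg_distrib]
  apply Finset.sum_congr rfl
  intro j _
  rw [mul_neg, Real.sin_neg, neg_div]

lemma TT_two_pi (n : ℕ) (x : ℝ) : TT n (2*π-x) = - TT n x := by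
  unfold TT
  rw [← Finset.sum_neg_distrib]
  apply Finset.sum_congr rfl
  intro j _
  have : ((j:ℝ)+1)*(2*π-x) = ((j+1:ℕ):ℝ)*(2*π) - (j+1)*x := by push_cast; ring
  rw [this, Real.sin_nat_mul_two_pi_sub, neg_div]

lemma E_bound2 (x : ℝ) (hx : 0 < x) (hx' : x < 2*π) (n : ℕ) :
    |saw x - TT n x| ≤ 1/(n+1) * (1 / |Real.sin (x/2)|) := by
  have hs0 : 0 < Real.sin (x/2) := Real.sin_pos_of_pos_of_lt_pi (by linarith) (by linarith [Real.pi_pos])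
  rw [abs_of_pos hs0, one_div_mul_one_div]
  have : saw x = (π - x)/2 := by simp [saw, hx]
  rw [this]
  rcases le_total x π with h | h
  · exact E_bound1 x hx h n
  · have := E_bound1 (2*π-x) (by linarith) (by linarith) n
    rw [TT_two_pi, show (2*π-x)/2 = π - x/2 by ring, Real.sin_pi_sub, ← abs_neg] at this
    convert this using 2
    ring

lemma E_bound (x : ℝ) (hx : -(2*π) < x) (hx' : x < 2*π) (n : ℕ) :
    |saw x - TT n x| ≤ 1/(n+1) * (1 / |Real.sin (x/2)|) := by
  rcases lt_trichotomy x 0 with h | h | h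
  · have := E_bound2 (-x) (by linarith) (by linarith) n
    rw [TT_neg, neg_div, Real.sin_neg, abs_neg, ← abs_neg] at this
    convert this using 2
    simp [saw, h]; ring
  · subst h; simp [saw, TT]
  · exact E_bound2 x h hx' n

noncomputable def qq (m u : ℝ) : ℝ :=
  Real.sin u ^ (m - 1) * (Real.sin u - u * Real.cos u) / u ^ (m + 2)

lemma num_nonneg (u : ℝ) (h0 : 0 < u) (h1 : u < π) : 0 ≤ Real.sin u - u * Real.cos u := by
  have hs : 0 < Real.sin u := Real.sin_pos_of_pos_of_lt_pi h0 h1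
  rcases lt_or_ge u (π/2) with h | h
  · have hc : 0 < Real.cos u := Real.cos_pos_of_mem_Ioo ⟨by linarith, h⟩
    have := Real.lt_tan h0 h
    rw [Real.tan_eq_sin_div_cos, lt_div_iff₀ hc] at this
    linarith
  · have : Real.cos u ≤ 0 := Real.cos_nonpos_of_pi_div_two_le_of_le h (by linarith)
    nlinarith

lemma qq_nonneg (m u : ℝ) (h0 : 0 < u) (h1 : u < π) : 0 ≤ qq m u := by
  have hs : 0 < Real.sin u := Real.sin_pos_of_pos_of_lt_pi h0 h1
  have := num_nonneg u h0 h1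
  unfold qq
  positivity

lemma qq_eq (m u : ℝ) (h0 : 0 < u) (h1 : u < π) :
    qq m u = Real.sinc u ^ (m-1) * ((Real.sin u - u * Real.cos u) / u^3) := by
  have hs : 0 < Real.sin u := Real.sin_pos_of_pos_of_lt_pi h0 h1
  rw [Real.sinc_of_ne_zero h0.ne', Real.div_rpow hs.le h0.le, qq,
    show m + 2 = (m-1) + (3:ℕ) by push_cast; ring, Real.rpow_add h0, Real.rpow_natCast]
  field_simp

lemma sinc_pow_cont (m : ℝ) (hm : 0 < m) : Continuous (fun u => Real.sinc u ^ m) :=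
  Real.continuous_sinc.rpow_const (fun _ => Or.inr hm.le)

lemma sinc_deriv (m u : ℝ) (h0 : 0 < u) (h1 : u < π) :
    HasDerivAt (fun u => -Real.sinc u ^ m) (m * u * qq m u) u := by
  have hs : 0 < Real.sin u := Real.sin_pos_of_pos_of_lt_pi h0 h1
  have h : HasDerivAt Real.sinc ((Real.cos u * u - Real.sin u * 1)/u^2) u := by
    refine ((Real.hasDerivAt_sin u).div (hasDerivAt_id u) h0.ne').congr_of_eventuallyEq ?_
    filter_upwards [eventually_ne_nhds h0.ne'] with y hy
    simp [Real.sinc_of_ne_zero hy]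
  have hp : 0 < Real.sinc u := by rw [Real.sinc_of_ne_zero h0.ne']; positivity
  refine (h.rpow_const (p := m) (Or.inl hp.ne')).neg.congr_deriv ?_
  rw [qq_eq m u h0 h1]
  field_simp
  ring

lemma der_int (m : ℝ) (hm : 0 < m) : IntegrableOn (fun u => m * u * qq m u) (Set.Ioc 0 π) := by
  apply intervalIntegral.integrableOn_deriv_of_nonneg (g := fun u => -Real.sinc u ^ m)
  · exact (sinc_pow_cont m hm).neg.continuousOn
  · intro u hu; exact sinc_deriv m u hu.1 hu.2
  · intro u hu
    have := qq_nonneg m u hu.1 hu.2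
    have := hu.1
    positivity

lemma qq_meas (m : ℝ) : Measurable (qq m) := by
  unfold qq
  fun_prop

lemma qq_int (m : ℝ) (hm : 0 < m) : IntegrableOn (qq m) (Set.Ioo 0 π) := by
  have hpi := Real.pi_gt_three
  have : Set.Ioo (0:ℝ) π = Set.Ioc 0 1 ∪ Set.Ioo 1 π :=
    (Set.Ioc_union_Ioo_eq_Ioo (by norm_num) (by linarith)).symm
  rw [this]
  refine IntegrableOn.union ?_ ?_
  · have hc : ContinuousOn (fun u => Real.sinc u ^ (m-1)) (Set.Icc 0 1) := by
      apply Real.continuous_sinc.continuousOn.rpow_const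
      intro u hu
      left
      rcases hu.1.eq_or_lt with h | h
      · simp [← h]
      · rw [Real.sinc_of_ne_zero h.ne']
        have : 0 < Real.sin u := Real.sin_pos_of_pos_of_lt_pi h (by linarith [hu.2])
        positivity
    have hi := (hc.integrableOn_Icc (μ := volume)).mono_set Set.Ioc_subset_Icc_self
    refine Integrable.mono' hi (qq_meas m).aestronglyMeasurable ?_
    refine (ae_restrict_mem measurableSet_Ioc).mono fun u hu => ?_
    have hup : u < π := by linarith [hu.2]
    have h0 := hu.1
    have hs : 0 < Real.sin u := Real.sin_pos_of_pos_of_lt_pi h0 hup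
    have hp : 0 < Real.sinc u := by rw [Real.sinc_of_ne_zero h0.ne']; positivity
    rw [Real.norm_eq_abs, abs_of_nonneg (qq_nonneg m u h0 hup), qq_eq m u h0 hup]
    apply mul_le_of_le_one_right (by positivity)
    rw [div_le_one (by positivity)]
    have a := Real.sin_le h0.le
    have b := mul_le_mul_of_nonneg_left (Real.one_sub_sq_div_two_le_cos (x := u)) h0.le
    have c : 0 < u^3 := by positivity
    nlinarith
  · have hi := ((der_int m hm).mono_set (s := Set.Ioo 1 π) (fun u hu => ⟨by linarith [hu.1], hu.2.le⟩)).const_mul (1/m)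
    refine Integrable.mono' hi (qq_meas m).aestronglyMeasurable ?_
    refine (ae_restrict_mem measurableSet_Ioo).mono fun u hu => ?_
    have h := qq_nonneg m u (by linarith [hu.1]) hu.2
    rw [Real.norm_eq_abs, abs_of_nonneg h]
    have : 1 / m * (m * u * qq m u) = u * qq m u := by field_simp
    rw [this]
    exact le_mul_of_one_le_left h hu.1.le

lemma step_bound (m : ℝ) (hm : 0 < m) (h : ℝ) (hh : 0 < h) (j : ℕ) (hj : (j+1)*h ≤ π) :
    0 ≤ Real.sinc (j*h) ^ m - Real.sinc ((j+1)*h) ^ m ∧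
    (Real.sinc (j*h) ^ m - Real.sinc ((j+1)*h) ^ m) * (1/(j+1)) ≤
      h * m * ∫ u in (j*h)..((j+1)*h), qq m u := by
  have hjh : (0:ℝ) ≤ j*h := by positivity
  have hle : (j:ℝ)*h ≤ (j+1)*h := by nlinarith
  have hsub : Set.Ioo ((j:ℝ)*h) ((j+1)*h) ⊆ Set.Ioo 0 π := Set.Ioo_subset_Ioo hjh hj
  have i1 : IntervalIntegrable (qq m) volume (j*h) ((j+1)*h) := by
    rw [intervalIntegrable_iff_integrableOn_Ioo_of_le hle]
    exact (qq_int m hm).mono_set hsub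
  have i2 : IntervalIntegrable (fun u => m * u * qq m u) volume (j*h) ((j+1)*h) := by
    rw [intervalIntegrable_iff_integrableOn_Ioo_of_le hle]
    exact (der_int m hm).mono_set (hsub.trans Set.Ioo_subset_Ioc_self)
  have e := intervalIntegral.integral_eq_sub_of_hasDerivAt_of_le hle
    (f := fun u => -Real.sinc u ^ m) (sinc_pow_cont m hm).neg.continuousOn (fun u hu => sinc_deriv m u (hsub hu).1 (hsub hu).2) i2
  have e' : Real.sinc (j*h) ^ m - Real.sinc ((j+1)*h) ^ m = ∫ u in (j*h)..((j+1)*h), m * u * qq m u := by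
    rw [e]; ring
  rw [e']
  constructor
  · rw [intervalIntegral.integral_of_le hle, integral_Ioc_eq_integral_Ioo]
    apply setIntegral_nonneg measurableSet_Ioo
    intro u hu
    have := qq_nonneg m u (hsub hu).1 (hsub hu).2
    have := (hsub hu).1
    positivity
  · rw [← intervalIntegral.integral_mul_const, ← intervalIntegral.integral_const_mul]
    apply intervalIntegral.integral_mono_on_of_le_Ioo hle (i2.mul_const _) (i1.const_mul _)
    intro u hu
    have := qq_nonneg m u (hsub hu).1 (hsub hu).2
    have h3 : u * (1/(j+1)) ≤ h := by
      rw [mul_one_div, div_le_iff₀ (by positivity)]; linarith [hu.2]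
    calc m * u * qq m u * (1/(j+1)) = (u * (1/(j+1))) * (m * qq m u) := by ring
      _ ≤ h * (m * qq m u) := by gcongr
      _ = _ := by ring

lemma sum_bound (m : ℝ) (hm : 0 < m) (h : ℝ) (hh : 0 < h) (n : ℕ) (hn : n*h ≤ π) :
    ∑ j ∈ Finset.range n, (Real.sinc (j*h) ^ m - Real.sinc ((j+1)*h) ^ m) * (1/(j+1)) ≤
      h * m * lanczosCm m := by
  have hj : ∀ j ∈ Finset.range n, ((j:ℝ)+1)*h ≤ π := by
    intro j hj
    have : (j:ℝ)+1 ≤ n := by exact_mod_cast Finset.mem_range.mp hj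
    nlinarith
  refine (Finset.sum_le_sum fun j h' => (step_bound m hm h hh j (hj j h')).2).trans ?_
  rw [← Finset.mul_sum]
  have hint : ∀ a b : ℝ, 0 ≤ a → a ≤ b → b ≤ π → IntervalIntegrable (qq m) volume a b := by
    intro a b ha hab hb
    rw [intervalIntegrable_iff_integrableOn_Ioo_of_le hab]
    exact (qq_int m hm).mono_set (Set.Ioo_subset_Ioo ha hb)
  have e := intervalIntegral.sum_integral_adjacent_intervals (f := qq m) (μ := volume)
    (a := fun j : ℕ => (j:ℝ)*h) (n := n) (fun k hk => by
      have := hj k (Finset.mem_range.mpr hk)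
      apply hint
      · positivity
      · push_cast; nlinarith
      · push_cast; exact this)
  push_cast at e
  rw [e]
  apply mul_le_mul_of_nonneg_left _ (by positivity)
  rw [zero_mul, intervalIntegral.integral_of_le (by positivity), integral_Ioc_eq_integral_Ioo]
  apply setIntegral_mono_set (qq_int m hm)
  · refine (ae_restrict_mem measurableSet_Ioo).mono fun u hu => ?_
    exact qq_nonneg m u hu.1 hu.2
  · exact (Set.Ioo_subset_Ioo le_rfl hn).eventuallyLE

lemma dampL_eq (m : ℝ) (k j : ℕ) : dampL m k j = Real.sinc (j*(π/(k+1))) ^ m := by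
  unfold dampL
  split_ifs with h
  · simp [h]
  · have : (0:ℝ) < j := by exact_mod_cast Nat.pos_of_ne_zero h
    have := Real.pi_pos
    rw [Real.sinc_of_ne_zero (by positivity), mul_div_assoc]

lemma Jfun_eq (α β θ : ℝ) : Jfun α β θ = 1 / |Real.sin ((θ + α) / 2)| + 1 / |Real.sin ((θ - α) / 2)|
      + 1 / |Real.sin ((θ + β) / 2)| + 1 / |Real.sin ((θ - β) / 2)| := by
  unfold Jfun
  split_ifs with h1 h2
  · subst h1; simp [add_assoc]
  · subst h2; simp
    rw [show (θ - α)/2 = -((α-θ)/2) by ring, Real.sin_neg, abs_neg, add_comm θ α]; ring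
  · rfl

/-- undamped partial sums -/
noncomputable def gn (α β θ : ℝ) (n : ℕ) : ℝ :=
  ∑ j ∈ Finset.range (n+1), fourierC α β j * Real.cos (j*θ)

lemma gn_eq (α β θ : ℝ) (n : ℕ) : gn α β θ n = (α-β)/π +
    (1/π) * (TT n (θ+α) - TT n (θ-α) - TT n (θ+β) + TT n (θ-β)) := by
  unfold gn TT
  rw [Finset.sum_range_succ']
  rw [← Finset.sum_sub_distrib, ← Finset.sum_sub_distrib, ← Finset.sum_add_distrib, Finset.mul_sum, add_comm]
  congr 1
  · simp [fourierC]
  · apply Finset.sum_congr rfl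
    intro j _
    simp only [fourierC]
    push_cast
    simp only [mul_add ((j:ℝ)+1), mul_sub ((j:ℝ)+1), Real.sin_add, Real.sin_sub]
    ring

lemma step_eq (α β θ : ℝ) (hβ : 0 < β) (hβα : β < α) (hθ : 0 ≤ θ) :
    stepG α β θ = (α-β)/π + (1/π) * (saw (θ+α) - saw (θ-α) - saw (θ+β) + saw (θ-β)) := by
  have hpi := Real.pi_pos
  have s1 : SignType.sign (θ+α) = 1 := sign_pos (by linarith)
  have s2 : SignType.sign (θ+β) = 1 := sign_pos (by linarith)
  unfold saw stepG
  rw [s1, s2]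
  rcases lt_trichotomy θ α with h | h | h
  · rw [sign_neg (sub_neg.mpr h)]
    rcases lt_trichotomy θ β with h' | h' | h'
    · rw [sign_neg (sub_neg.mpr h')]
      simp [h.ne, h'.ne, not_lt.mpr h'.le]; field_simp; ring
    · subst h'; simp; field_simp; ring
    · rw [sign_pos (sub_pos.mpr h')]
      simp [h.ne, h'.ne', h, h']; field_simp; ring
  · subst h
    rw [sign_pos (sub_pos.mpr hβα)]
    simp; field_simp; ring
  · rw [sign_pos (sub_pos.mpr h), sign_pos (sub_pos.mpr (hβα.trans h))]
    simp [h.ne', (hβα.trans h).ne', not_lt.mpr h.le]; field_simp; ring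

lemma gn_bound (α β : ℝ) (hβ : 0 < β) (hβα : β < α) (hα : α < π) (θ : ℝ)
    (hθ : θ ∈ Set.Icc (0:ℝ) π) (n : ℕ) :
    |stepG α β θ - gn α β θ n| ≤ Jfun α β θ / π * (1/(n+1)) := by
  have hpi := Real.pi_pos
  obtain ⟨h0, h1⟩ := hθ
  rw [step_eq α β θ hβ hβα h0, gn_eq, Jfun_eq]
  have b1 := E_bound (θ+α) (by linarith) (by linarith) n
  have b2 := E_bound (θ-α) (by linarith) (by linarith) n
  have b3 := E_bound (θ+β) (by linarith) (by linarith) n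
  have b4 := E_bound (θ-β) (by linarith) (by linarith) n
  rw [add_sub_add_left_eq_sub, ← mul_sub, abs_mul, abs_of_pos (by positivity : 0 < 1/π)]
  have hr : ∀ a b : ℝ, a / π * b = 1/π * (b * a) := fun a b => by ring
  rw [hr _ (1/((n:ℝ)+1))]
  apply mul_le_mul_of_nonneg_left _ (by positivity)
  generalize 1 / |Real.sin ((θ + α) / 2)| = A1 at *
  generalize 1 / |Real.sin ((θ - α) / 2)| = A2 at *
  generalize 1 / |Real.sin ((θ + β) / 2)| = A3 at *
  generalize 1 / |Real.sin ((θ - β) / 2)| = A4 at *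
  generalize (1:ℝ)/(n+1) = r at *
  rw [abs_le] at *
  constructor <;> linarith [b1.1, b2.1, b3.1, b4.1, b1.2, b2.2, b3.2, b4.2]

lemma abel (α β m : ℝ) (k n : ℕ) (θ : ℝ) (g : ℝ) :
    g - dampedGk α β m k n θ = dampL m k n * (g - gn α β θ n) +
      ∑ j ∈ Finset.range n, (dampL m k j - dampL m k (j+1)) * (g - gn α β θ j) := by
  induction n with
  | zero => simp [dampedGk, gn, dampL]
  | succ n ih =>
    have e1 : dampedGk α β m k (n+1) θ = dampedGk α β m k n θ +
      fourierC α β (n+1) * dampL m k (n+1) * Real.cos ((n+1:ℕ)*θ) := by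
      unfold dampedGk; rw [Finset.sum_range_succ]
    have e2 : gn α β θ (n+1) = gn α β θ n +
      fourierC α β (n+1) * Real.cos ((n+1:ℕ)*θ) := by
      unfold gn; rw [Finset.sum_range_succ]
    rw [Finset.sum_range_succ, e1, e2]
    linear_combination ih

/-- Pointwise bound for the damped Fourier partial sums of the step function:
`|g(θ) - g^m_{k',k}(θ)| ≤ d^m_{k',k} J(θ)/(π(k'+1)) + m C_m J(θ)/(k+1) + mπ(π-θ)/(3(k+1)²)`. -/
theorem damped_fourier_step_error_bound (α β : ℝ) (hβ : 0 < β) (hβα : β < α)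
    (hα : α < Real.pi) (m : ℝ) (hm : 0 < m) (k k' : ℕ) (hk' : 1 ≤ k') (hk'k : k' ≤ k)
    (θ : ℝ) (hθ : θ ∈ Set.Icc (0 : ℝ) Real.pi) :
    |stepG α β θ - dampedGk α β m k k' θ|
      ≤ dampL m k k' * Jfun α β θ / (Real.pi * (k' + 1))
        + m * lanczosCm m * Jfun α β θ / (k + 1)
        + m * Real.pi * (Real.pi - θ) / (3 * (k + 1) ^ 2) := by
  have hpi := Real.pi_pos
  have hJ : 0 ≤ Jfun α β θ := by rw [Jfun_eq]; positivity
  have hh : 0 < π/((k:ℝ)+1) := by positivity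
  have hkk : (k':ℝ) ≤ k := by exact_mod_cast hk'k
  have hn : (k':ℝ) * (π/((k:ℝ)+1)) ≤ π := by
    rw [mul_div_assoc', div_le_iff₀ (by positivity)]; nlinarith
  have hd : 0 ≤ dampL m k k' := by
    rw [dampL_eq]
    apply Real.rpow_nonneg
    rw [Real.sinc_of_ne_zero (by positivity)]
    exact div_nonneg (Real.sin_nonneg_of_nonneg_of_le_pi (by positivity) hn) (by positivity)
  have h3 : 0 ≤ m * Real.pi * (Real.pi - θ) / (3 * (k + 1) ^ 2) := by
    have := sub_nonneg.mpr hθ.2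
    positivity
  have hb := gn_bound α β hβ hβα hα θ hθ
  have hsum : ∑ j ∈ Finset.range k', |(dampL m k j - dampL m k (j+1)) * (stepG α β θ - gn α β θ j)|
      ≤ m * lanczosCm m * Jfun α β θ / (k + 1) := by
    have s := mul_le_mul_of_nonneg_left (sum_bound m hm _ hh k' hn)
      (by positivity : 0 ≤ Jfun α β θ / π)
    have e : Jfun α β θ / π * (π / (k + 1) * m * lanczosCm m) = m * lanczosCm m * Jfun α β θ / (k + 1) := by
      field_simp
    rw [e] at s
    refine le_trans ?_ s
    rw [Finset.mul_sum]
    apply Finset.sum_le_sum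
    intro j hj
    have hj1 : (j:ℝ)+1 ≤ k' := by exact_mod_cast Finset.mem_range.mp hj
    have hnn := (step_bound m hm _ hh j ((mul_le_mul_of_nonneg_right hj1 hh.le).trans hn)).1
    rw [dampL_eq, dampL_eq, abs_mul]
    push_cast
    rw [abs_of_nonneg hnn]
    calc _ ≤ _ := mul_le_mul_of_nonneg_left (hb j) hnn
      _ = _ := by ring
  rw [abel]
  refine (abs_add_le _ _).trans ?_
  have t1 : |dampL m k k' * (stepG α β θ - gn α β θ k')| ≤ dampL m k k' * Jfun α β θ / (Real.pi * (k' + 1)) := by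
    rw [abs_mul, abs_of_nonneg hd]
    refine (mul_le_mul_of_nonneg_left (hb k') hd).trans (le_of_eq ?_)
    field_simp
  linarith [(Finset.abs_sum_le_sum_abs (fun j => (dampL m k j - dampL m k (j+1)) * (stepG α β θ - gn α β θ j)) (Finset.range k')).trans hsum]
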